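/- arXiv:1104.4820 — 3 statements merged into one kernel-verified Lean document; each statement's English description precedes it below -/
import Mathlib

section
/- For every A ∈ 𝒯, the Cesàro means of its Fourier series converge to A in operator norm: σ_N := Σ_{k=−N}^{N} (1 − |k|/(N+1)) A_k satisfies ‖σ_N − A‖ → 0 as N → ∞. -/
/-- `T_{n,m} = Tⁿ (T*)ᵐ` for a bounded operator `T` on a complex Hilbert space. -/
noncomputable def Tnm {H : Type*} [NormedAddCommGroup H] [InnerProductSpace ℂ H]
    [CompleteSpace H] (T : H →L[ℂ] H) (n m : ℕ) : H →L[ℂ] H :=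
  T ^ n * (ContinuousLinearMap.adjoint T) ^ m

/-- The Toeplitz algebra: the norm-closed star-subalgebra of `B(H)` generated by `T`. -/
noncomputable def ToeplitzAlg {H : Type*} [NormedAddCommGroup H] [InnerProductSpace ℂ H]
    [CompleteSpace H] (T : H →L[ℂ] H) : StarSubalgebra ℂ (H →L[ℂ] H) :=
  StarAlgebra.elemental ℂ T

/-- The `k`-th Fourier coefficient `A_k = (1/2π) ∫₀^{2π} e^{-ikθ} U_θ A U_θ* dθ`
(a Bochner integral in `B(H)`). -/
noncomputable def opFourierCoeff {H : Type*} [NormedAddCommGroup H] [InnerProductSpace ℂ H]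
    [CompleteSpace H] (U : ℝ → H →L[ℂ] H) (A : H →L[ℂ] H) (k : ℤ) : H →L[ℂ] H :=
  (2 * Real.pi)⁻¹ • ∫ θ in (0 : ℝ)..(2 * Real.pi),
    Complex.exp (-(k : ℂ) * θ * Complex.I) • (U θ * A * ContinuousLinearMap.adjoint (U θ))

/-!
The orbit `θ ↦ U_θ A U_θ*` of an operator is a `2π`-periodic function whose Fourier coefficients are
the `A_k` and whose value at `0` is `A`, so the theorem is Fejér's theorem for Banach-valued
functions as soon as the orbit is norm continuous. Fejér's theorem holds because the Fejér kernels
are nonnegative, have integral one and tend to zero uniformly away from `0`. Conjugations by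
unitaries are contractive `*`-homomorphisms, hence the operators with norm continuous orbit form a
closed `*`-subalgebra, and it contains the shift because `U_θ T U_θ* = e^{iθ} T`.
-/

open Finset Filter Topology MeasureTheory AddCircle

section FejerKernel

theorem sum_Icc_neg_zpow {K : Type*} [Field K] {z : K} (hz : z ≠ 0) (N : ℕ) :
    ∑ k ∈ Icc (-(N : ℤ)) N, z ^ k =
      z ^ N * ∑ j ∈ range N, z⁻¹ ^ j + 1 + z⁻¹ ^ N * ∑ j ∈ range N, z ^ j := by
  induction N with
  | zero => simp
  | succ N ih =>
    have hends := sum_Icc_succ_eq_add_endpoints (fun k : ℤ => z ^ k) (N := N)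
    push_cast at hends ⊢
    rw [hends, ih, geom_sum_succ, geom_sum_succ, ← inv_zpow']
    norm_cast
    linear_combination (-(z ^ N * ∑ j ∈ range N, z⁻¹ ^ j) - z⁻¹ ^ N * ∑ j ∈ range N, z ^ j) *
      mul_inv_cancel₀ hz

/-- The sums over `[-N, N]` with triangular weights grow by a Dirichlet kernel at each step, and so
does the product of the two geometric sums. -/
theorem sum_Icc_neg_mul_zpow {K : Type*} [Field K] {z : K} (hz : z ≠ 0) (N : ℕ) :
    ∑ k ∈ Icc (-(N : ℤ)) N, ((N : K) + 1 - (|k| : ℤ)) * z ^ k =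
      (∑ j ∈ range (N + 1), z ^ j) * ∑ j ∈ range (N + 1), z⁻¹ ^ j := by
  induction N with
  | zero => simp
  | succ N ih =>
    have hinner : ∑ k ∈ Icc (-((N + 1 : ℕ) : ℤ)) (N + 1 : ℕ), ((N : K) + 1 - (|k| : ℤ)) * z ^ k =
        ∑ k ∈ Icc (-(N : ℤ)) N, ((N : K) + 1 - (|k| : ℤ)) * z ^ k := by
      have habs : |(N : ℤ) + 1| = N + 1 := abs_of_nonneg (by positivity)
      have habs' : |-((N : ℤ) + 1)| = N + 1 := by rw [abs_neg, habs]
      push_cast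
      rw [sum_Icc_succ_eq_add_endpoints, habs, habs']
      simp
    have hone : z ^ (N + 1) * z⁻¹ ^ (N + 1) = 1 := by
      rw [← mul_pow, mul_inv_cancel₀ hz, one_pow]
    calc ∑ k ∈ Icc (-((N + 1 : ℕ) : ℤ)) (N + 1 : ℕ), (((N + 1 : ℕ) : K) + 1 - (|k| : ℤ)) * z ^ k
        = ∑ k ∈ Icc (-((N + 1 : ℕ) : ℤ)) (N + 1 : ℕ), ((N : K) + 1 - (|k| : ℤ)) * z ^ k +
            ∑ k ∈ Icc (-((N + 1 : ℕ) : ℤ)) (N + 1 : ℕ), z ^ k := by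
          rw [← sum_add_distrib]
          exact sum_congr rfl fun k _ => by push_cast; ring
      _ = _ := by
          rw [hinner, ih, sum_Icc_neg_zpow hz, sum_range_succ _ (N + 1), sum_range_succ _ (N + 1)]
          linear_combination -hone

theorem norm_sub_one_mul_norm_geom_sum_le {K : Type*} [NormedDivisionRing K] {z : K} (hz : ‖z‖ ≤ 1)
    (n : ℕ) : ‖z - 1‖ * ‖∑ j ∈ range n, z ^ j‖ ≤ 2 := by
  rw [← norm_mul, mul_geom_sum]
  calc ‖z ^ n - 1‖ ≤ ‖z ^ n‖ + ‖(1 : K)‖ := norm_sub_le _ _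
    _ ≤ 1 + 1 := by
        rw [norm_pow, norm_one]
        gcongr
        exact pow_le_one₀ (norm_nonneg z) hz
    _ = 2 := one_add_one_eq_two

variable {T : ℝ}

theorem fourier_eq_toCircle_zpow (k : ℤ) (t : AddCircle T) :
    fourier k t = (toCircle t : ℂ) ^ k := by
  rw [fourier_apply, toCircle_zsmul, Circle.coe_zpow]

theorem fourier_sub (k : ℤ) (x t : AddCircle T) :
    fourier k (x - t) = fourier k x * fourier (-k) t := by
  rw [fourier_apply, smul_sub, sub_eq_add_neg, ← neg_smul, toCircle_add, Circle.coe_mul,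
    ← fourier_apply, ← fourier_apply]

/-- The Fejér kernel of order `N` on the circle of length `T`, in the form that makes its positivity
visible; `fejerKernel_eq_sum` gives its Fourier expansion. -/
noncomputable def fejerKernel (N : ℕ) (t : AddCircle T) : ℝ :=
  ((N : ℝ) + 1)⁻¹ * ‖∑ j ∈ range (N + 1), (toCircle t : ℂ) ^ j‖ ^ 2

theorem fejerKernel_nonneg (N : ℕ) (t : AddCircle T) : 0 ≤ fejerKernel N t := by
  unfold fejerKernel
  positivity

theorem continuous_fejerKernel (N : ℕ) : Continuous (fejerKernel N : AddCircle T → ℝ) := by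
  have : Continuous fun t : AddCircle T => (toCircle t : ℂ) :=
    continuous_subtype_val.comp continuous_toCircle
  unfold fejerKernel
  fun_prop

theorem fejerKernel_eq_sum (N : ℕ) (t : AddCircle T) :
    (fejerKernel N t : ℂ) = ∑ k ∈ Icc (-(N : ℤ)) N,
      ((1 - |(k : ℝ)| / ((N : ℝ) + 1) : ℝ) : ℂ) * fourier k t := by
  have hN : ((N : ℂ) + 1) ≠ 0 := by exact_mod_cast N.succ_ne_zero
  unfold fejerKernel
  push_cast
  rw [← Complex.mul_conj', map_sum]
  simp_rw [map_pow, ← Circle.coe_inv_eq_conj, Circle.coe_inv]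
  rw [← sum_Icc_neg_mul_zpow (Circle.coe_ne_zero _), mul_sum]
  refine sum_congr rfl fun k _ => ?_
  rw [fourier_eq_toCircle_zpow]
  push_cast [← Int.cast_abs]
  field_simp

theorem norm_toCircle_sub_one_sq_mul_fejerKernel_le (N : ℕ) (t : AddCircle T) :
    ‖(toCircle t : ℂ) - 1‖ ^ 2 * fejerKernel N t ≤ 4 / ((N : ℝ) + 1) := by
  have hgeom := norm_sub_one_mul_norm_geom_sum_le (Circle.norm_coe (toCircle t)).le (N + 1)
  calc ‖(toCircle t : ℂ) - 1‖ ^ 2 * fejerKernel N t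
      = (‖(toCircle t : ℂ) - 1‖ * ‖∑ j ∈ range (N + 1), (toCircle t : ℂ) ^ j‖) ^ 2 /
          ((N : ℝ) + 1) := by
        unfold fejerKernel
        ring
    _ ≤ 2 ^ 2 / ((N : ℝ) + 1) := by gcongr
    _ = 4 / ((N : ℝ) + 1) := by norm_num

variable [hT : Fact (0 < T)]

theorem tendstoUniformlyOn_fejerKernel {s : Set (AddCircle T)} (hs : IsCompact s) (h0 : 0 ∉ s) :
    TendstoUniformlyOn (fun N : ℕ => fejerKernel N) 0 atTop s := by
  have hcont : Continuous fun t : AddCircle T => ‖(toCircle t : ℂ) - 1‖ ^ 2 := by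
    have : Continuous fun t : AddCircle T => (toCircle t : ℂ) :=
      continuous_subtype_val.comp continuous_toCircle
    fun_prop
  have hpos : ∀ t ∈ s, 0 < ‖(toCircle t : ℂ) - 1‖ ^ 2 := by
    intro t ht
    have hne : toCircle t ≠ 1 := fun h => h0 <| by
      rwa [← injective_toCircle hT.out.ne' (h.trans toCircle_zero.symm)]
    have : (toCircle t : ℂ) - 1 ≠ 0 := sub_ne_zero.mpr (Circle.coe_eq_one.not.mpr hne)
    positivity
  obtain ⟨c, hc, hcs⟩ := hs.exists_forall_le' hcont.continuousOn hpos
  have hlim : Tendsto (fun N : ℕ => 4 / ((N : ℝ) + 1) / c) atTop (𝓝 0) := by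
    simpa using ((tendsto_const_nhds (x := (4 : ℝ))).div_atTop
      (tendsto_atTop_add_const_right _ 1 tendsto_natCast_atTop_atTop)).div_const c
  rw [Metric.tendstoUniformlyOn_iff]
  intro ε hε
  filter_upwards [hlim.eventually_lt_const hε] with N hN t ht
  rw [Pi.zero_apply, dist_zero_left, Real.norm_of_nonneg (fejerKernel_nonneg N t)]
  refine lt_of_le_of_lt ?_ hN
  rw [le_div_iff₀' hc]
  exact (mul_le_mul_of_nonneg_right (hcs t ht) (fejerKernel_nonneg N t)).trans
    (norm_toCircle_sub_one_sq_mul_fejerKernel_le N t)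

theorem integral_fourier (k : ℤ) :
    ∫ t : AddCircle T, fourier k t ∂haarAddCircle = if k = 0 then 1 else 0 := by
  have h := congrFun (fourierCoeff_fourier (T := T) 0) (-k)
  simpa [fourierCoeff, Pi.single_apply] using h

theorem integral_fejerKernel (N : ℕ) :
    ∫ t : AddCircle T, fejerKernel N t ∂haarAddCircle = 1 := by
  have h : ((∫ t : AddCircle T, fejerKernel N t ∂haarAddCircle : ℝ) : ℂ) = 1 := by
    rw [← integral_complex_ofReal]
    simp_rw [fejerKernel_eq_sum]
    rw [integral_finsetSum _ fun k _ =>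
      (Continuous.integrable_of_hasCompactSupport (by fun_prop) (.of_compactSpace _))]
    simp_rw [integral_const_mul, integral_fourier]
    simp
  exact_mod_cast h

end FejerKernel

section FejerTheorem

variable {T : ℝ} [hT : Fact (0 < T)] {E : Type*} [NormedAddCommGroup E] [NormedSpace ℂ E]

/-- The `N`-th Cesàro mean at `x` of the Fourier series of `f`, that is, the average of its partial
sums of orders `0, …, N`. -/
noncomputable def fejerMean (f : AddCircle T → E) (N : ℕ) (x : AddCircle T) : E :=
  ∑ k ∈ Icc (-(N : ℤ)) N, (1 - |(k : ℝ)| / ((N : ℝ) + 1)) • fourier k x • fourierCoeff f k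

theorem fejerMean_eq_integral {f : AddCircle T → E} (hf : Integrable f haarAddCircle) (N : ℕ)
    (x : AddCircle T) : fejerMean f N x = ∫ t, fejerKernel N t • f (x - t) ∂haarAddCircle := by
  have hexpand : ∀ t, fejerKernel N (x - t) • f t = ∑ k ∈ Icc (-(N : ℤ)) N,
      (1 - |(k : ℝ)| / ((N : ℝ) + 1)) • fourier k x • fourier (-k) t • f t := by
    intro t
    rw [← Complex.coe_smul, fejerKernel_eq_sum, sum_smul]
    refine sum_congr rfl fun k _ => ?_
    rw [mul_smul, Complex.coe_smul, fourier_sub, mul_smul]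
  have hint : ∀ k ∈ Icc (-(N : ℤ)) N, Integrable (fun t =>
      (1 - |(k : ℝ)| / ((N : ℝ) + 1)) • fourier k x • fourier (-k) t • f t) haarAddCircle :=
    fun k _ => ((hf.fourier_smul (-k)).smul (fourier k x)).smul _
  calc fejerMean f N x = ∫ t, fejerKernel N (x - t) • f t ∂haarAddCircle := by
        simp_rw [hexpand]
        simp_rw [integral_finsetSum _ hint, integral_smul]
        rfl
    _ = ∫ t, fejerKernel N t • f (x - t) ∂haarAddCircle := by
        rw [← integral_sub_left_eq_self _ haarAddCircle x]
        simp_rw [sub_sub_cancel]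

theorem tendsto_fejerMean [CompleteSpace E] {f : AddCircle T → E}
    (hf : Integrable f haarAddCircle) {x : AddCircle T} (hx : ContinuousAt f x) :
    Tendsto (fun N => fejerMean f N x) atTop (𝓝 (f x)) := by
  simp_rw [fejerMean_eq_integral hf]
  have hlim : Tendsto (fun t => f (x - t)) (𝓝 0) (𝓝 (f x)) :=
    hx.tendsto.comp <| by simpa using (continuous_sub_left x).tendsto 0
  refine tendsto_integral_peak_smul_of_integrable_of_tendsto MeasurableSet.univ univ_mem
    (measure_ne_top _ _) (.of_forall fejerKernel_nonneg)
    (fun u hu h0 => tendstoUniformlyOn_fejerKernel hu.isClosed_compl.isCompact (by simpa using h0))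
    ?_ (.of_forall fun N => (continuous_fejerKernel N).aestronglyMeasurable)
    (hf.comp_sub_left x) hlim
  simp_rw [setIntegral_univ, integral_fejerKernel]
  exact tendsto_const_nhds

end FejerTheorem

section ContinuousOrbit

variable {X A B F : Type*} [TopologicalSpace X] [CStarAlgebra A] [CStarAlgebra B]
  [FunLike F A B] [AlgHomClass F ℂ A B] [StarHomClass F A B]

/-- The elements of a C⋆-algebra whose orbit map `x ↦ α x a` under a family `α` of
`*`-homomorphisms is norm continuous. -/
def continuousOrbitSubalgebra (α : X → F) : StarSubalgebra ℂ A where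
  carrier := {a | Continuous fun x => α x a}
  mul_mem' ha hb := (ha.mul hb).congr fun x => (map_mul (α x) _ _).symm
  add_mem' ha hb := (ha.add hb).congr fun x => (map_add (α x) _ _).symm
  algebraMap_mem' c := continuous_const.congr fun x => (AlgHomClass.commutes (α x) c).symm
  star_mem' ha := ha.star.congr fun x => (map_star (α x) _).symm

theorem isClosed_continuousOrbitSubalgebra (α : X → F) :
    IsClosed (continuousOrbitSubalgebra α : Set A) := by
  refine isClosed_of_closure_subset fun a ha => continuous_of_uniform_approx_of_continuous ?_
  intro u hu
  obtain ⟨ε, hε, hεu⟩ := Metric.mem_uniformity_dist.mp hu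
  obtain ⟨b, hb, hab⟩ := Metric.mem_closure_iff.mp ha ε hε
  refine ⟨_, hb, fun x => hεu ?_⟩
  rw [dist_eq_norm] at hab ⊢
  rw [← map_sub]
  exact (NonUnitalStarAlgHom.norm_apply_le (α x) (a - b)).trans_lt hab

theorem continuous_conj_of_mem_elemental {u : X → A} (hu : ∀ x, u x ∈ unitary A) {a b : A}
    (ha : Continuous fun x => u x * a * star (u x)) (hb : b ∈ StarAlgebra.elemental ℂ a) :
    Continuous fun x => u x * b * star (u x) :=
  StarAlgebra.elemental.le_of_mem
    (isClosed_continuousOrbitSubalgebra fun x => Unitary.conjStarAlgAut ℂ A ⟨u x, hu x⟩) ha hb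

end ContinuousOrbit

section Diagonal

open ContinuousLinearMap (adjoint)
open scoped ComplexConjugate

variable {𝕜 ι H : Type*} [RCLike 𝕜] [NormedAddCommGroup H] [InnerProductSpace 𝕜 H]
  (e : HilbertBasis ι 𝕜 H)

theorem clm_ext_hilbertBasis {A B : H →L[𝕜] H} (h : ∀ i, A (e i) = B (e i)) : A = B :=
  ContinuousLinearMap.ext_on (Submodule.dense_iff_topologicalClosure_eq_top.mpr e.dense_span)
    (by rintro _ ⟨i, rfl⟩; exact h i)

variable [CompleteSpace H] {D : H →L[𝕜] H} {c : ι → 𝕜}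

theorem adjoint_apply_of_diagonal (hD : ∀ i, D (e i) = c i • e i) (i : ι) :
    adjoint D (e i) = conj (c i) • e i := by
  classical
  apply e.repr.injective
  ext j
  rw [HilbertBasis.repr_apply_apply, HilbertBasis.repr_apply_apply,
    ContinuousLinearMap.adjoint_inner_right, hD, inner_smul_left, inner_smul_right,
    orthonormal_iff_ite.mp e.orthonormal]
  split_ifs with h
  · rw [h]
  · simp only [mul_zero]

theorem mem_unitary_of_diagonal (hD : ∀ i, D (e i) = c i • e i) (hc : ∀ i, ‖c i‖ = 1) :
    D ∈ unitary (H →L[𝕜] H) := by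
  have hcc : ∀ i, c i * conj (c i) = 1 := fun i => by
    rw [RCLike.mul_conj, hc, RCLike.ofReal_one, one_pow]
  have hadj := adjoint_apply_of_diagonal e hD
  rw [Unitary.mem_iff, ContinuousLinearMap.star_eq_adjoint]
  constructor <;> refine clm_ext_hilbertBasis e fun i => ?_
  · simp [hD, hadj, smul_smul, hcc]
  · simp [hD, hadj, smul_smul, mul_comm (conj (c i)), hcc]

end Diagonal

section Rotation

open ContinuousLinearMap (adjoint)

variable {ι H : Type*} [NormedAddCommGroup H] [InnerProductSpace ℂ H]
  {e : HilbertBasis ι ℂ H} {w : ι → ℤ} {U : ℝ → H →L[ℂ] H}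

/-- `U` is the `2π`-periodic one-parameter group generated by the diagonal operator with integer
eigenvalues `w i` in the basis `e`; the `U_θ` of the Toeplitz algebra is the case `w n = n`. -/
def IsRotation (e : HilbertBasis ι ℂ H) (w : ι → ℤ) (U : ℝ → H →L[ℂ] H) : Prop :=
  ∀ θ i, U θ (e i) = Complex.exp ((w i : ℂ) * θ * Complex.I) • e i

namespace IsRotation

theorem apply_zero (hU : IsRotation e w U) : U 0 = 1 :=
  clm_ext_hilbertBasis e fun i => by simp [hU 0 i]

theorem periodic (hU : IsRotation e w U) : Function.Periodic U (2 * Real.pi) := by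
  refine fun θ => clm_ext_hilbertBasis e fun i => ?_
  have hexp : (w i : ℂ) * ((θ + 2 * Real.pi : ℝ) : ℂ) * Complex.I =
      (w i : ℂ) * θ * Complex.I + w i * (2 * Real.pi * Complex.I) := by
    push_cast
    ring
  rw [hU, hU, hexp, Complex.exp_add, Complex.exp_int_mul_two_pi_mul_I, mul_one]

variable [CompleteSpace H]

theorem mem_unitary (hU : IsRotation e w U) (θ : ℝ) : U θ ∈ unitary (H →L[ℂ] H) :=
  mem_unitary_of_diagonal e (hU θ) fun i => by
    exact_mod_cast Complex.norm_exp_ofReal_mul_I ((w i : ℝ) * θ)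

theorem conj_eq_exp_smul (hU : IsRotation e w U) {S : H →L[ℂ] H} {σ : ι → ι} {d : ℤ}
    (hS : ∀ i, S (e i) = e (σ i)) (hσ : ∀ i, w (σ i) = w i + d) (θ : ℝ) :
    U θ * S * adjoint (U θ) = Complex.exp (d * θ * Complex.I) • S := by
  have hcomm : U θ * S = Complex.exp (d * θ * Complex.I) • (S * U θ) := by
    refine clm_ext_hilbertBasis e fun i => ?_
    simp only [mul_apply_eq_comp, _root_.smul_apply, hS, hU θ _, hσ, map_smul,
      smul_smul, ← Complex.exp_add]
    congr 2
    push_cast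
    ring
  rw [hcomm, smul_mul_assoc, mul_assoc S, ← ContinuousLinearMap.star_eq_adjoint,
    Unitary.mul_star_self_of_mem (hU.mem_unitary θ), mul_one]

theorem continuous_conj_of_mem_toeplitzAlg (hU : IsRotation e w U) {S A : H →L[ℂ] H} {σ : ι → ι}
    {d : ℤ} (hS : ∀ i, S (e i) = e (σ i)) (hσ : ∀ i, w (σ i) = w i + d) (hA : A ∈ ToeplitzAlg S) :
    Continuous fun θ => U θ * A * adjoint (U θ) := by
  refine continuous_conj_of_mem_elemental hU.mem_unitary ?_ hA
  simp_rw [ContinuousLinearMap.star_eq_adjoint, hU.conj_eq_exp_smul hS hσ]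
  fun_prop

end IsRotation

end Rotation

section Cesaro

open ContinuousLinearMap (adjoint)

variable {H : Type*} [NormedAddCommGroup H] [InnerProductSpace ℂ H] [CompleteSpace H]

local instance factTwoPiPos : Fact (0 < 2 * Real.pi) := ⟨Real.two_pi_pos⟩

theorem opFourierCoeff_eq_fourierCoeff_lift {U : ℝ → H →L[ℂ] H} {A : H →L[ℂ] H}
    (hper : Function.Periodic (fun θ => U θ * A * adjoint (U θ)) (2 * Real.pi)) (k : ℤ) :
    opFourierCoeff U A k = fourierCoeff (T := 2 * Real.pi) hper.lift k := by
  rw [fourierCoeff_eq_intervalIntegral _ _ 0, zero_add, one_div, opFourierCoeff]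
  congr 2 with θ : 1
  rw [hper.lift_coe, fourier_coe_apply]
  congr 2
  push_cast
  field_simp

theorem cesaro_means_tendsto_general {U : ℝ → H →L[ℂ] H} (hU₀ : U 0 = 1)
    (hU : Function.Periodic U (2 * Real.pi)) {A : H →L[ℂ] H}
    (hA : Continuous fun θ => U θ * A * adjoint (U θ)) :
    Tendsto
      (fun N : ℕ =>
        ‖(∑ k ∈ Icc (-(N : ℤ)) (N : ℤ),
            ((1 : ℝ) - |(k : ℝ)| / ((N : ℝ) + 1)) • opFourierCoeff U A k) - A‖)
      atTop (𝓝 0) := by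
  have hper : Function.Periodic (fun θ => U θ * A * adjoint (U θ)) (2 * Real.pi) :=
    hU.comp fun V => V * A * adjoint V
  have hlift : Continuous (hper.lift : AddCircle (2 * Real.pi) → H →L[ℂ] H) :=
    hA.quotient_liftOn' _
  have hzero : hper.lift (0 : AddCircle (2 * Real.pi)) = A := by
    rw [← QuotientAddGroup.mk_zero, hper.lift_coe, hU₀, one_mul,
      ← ContinuousLinearMap.star_eq_adjoint, star_one, mul_one]
  have hfejer := tendsto_fejerMean (hlift.integrable_of_hasCompactSupport (.of_compactSpace _))
    (hlift.continuousAt (x := 0))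
  simp_rw [fejerMean, fourier_eval_zero, one_smul, hzero,
    ← opFourierCoeff_eq_fourierCoeff_lift hper] at hfejer
  exact tendsto_iff_norm_sub_tendsto_zero.mp hfejer

end Cesaro

/-- the Cesàro (Fejér) means of the Fourier series of `A ∈ 𝒯` converge to `A`
in operator norm. -/
theorem cesaro_means_tendsto {H : Type*} [NormedAddCommGroup H]
    [InnerProductSpace ℂ H] [CompleteSpace H] (e : HilbertBasis ℕ ℂ H) (T : H →L[ℂ] H)
    (hT : ∀ n : ℕ, T (e n) = e (n + 1))
    (U : ℝ → H →L[ℂ] H)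
    (hU : ∀ (θ : ℝ) (n : ℕ), U θ (e n) = Complex.exp ((n : ℂ) * θ * Complex.I) • e n)
    (A : H →L[ℂ] H) (hA : A ∈ ToeplitzAlg T) :
    Filter.Tendsto
      (fun N : ℕ =>
        ‖(∑ k ∈ Finset.Icc (-(N : ℤ)) (N : ℤ),
            ((1 : ℝ) - |(k : ℝ)| / ((N : ℝ) + 1)) • opFourierCoeff U A k) - A‖)
      Filter.atTop (nhds 0) := by
  have hrot : IsRotation e (fun n : ℕ => (n : ℤ)) U := fun θ n => mod_cast hU θ n
  exact cesaro_means_tendsto_general hrot.apply_zero hrot.periodic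
    (hrot.continuous_conj_of_mem_toeplitzAlg hT Nat.cast_succ hA)
end

section
/- Every element A ∈ 𝒯₀ is uniquely represented by an infinite series A = Σ_{n=0}^∞ β_n T_{n,n} converging in the strong operator topology, where the complex series Σ_{n=0}^∞ β_n converges; explicitly β_0 = ⟨A e_0, e_0⟩ and β_n = ⟨A e_n, e_n⟩ − ⟨A e_{n−1}, e_{n−1}⟩ for n ≥ 1. -/
open scoped ComplexInnerProductSpace

/-- The coefficients `β₀ = ⟨A e₀, e₀⟩`, `β_{n+1} = ⟨A e_{n+1}, e_{n+1}⟩ - ⟨A e_n, e_n⟩`. -/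
noncomputable def diagDiff {H : Type*} [NormedAddCommGroup H] [InnerProductSpace ℂ H]
    [CompleteSpace H] (e : HilbertBasis ℕ ℂ H) (A : H →L[ℂ] H) : ℕ → ℂ
  | 0 => ⟪e 0, A (e 0)⟫
  | n + 1 => ⟪e (n + 1), A (e (n + 1))⟫ - ⟪e n, A (e n)⟫

/-!
Operators that are diagonal in the basis `e`, and operators whose diagonal entries
`a k = ⟪e k, A (e k)⟫` converge, both form norm-closed subspaces; each `T_{n,n}`, being the
projection onto the closed span of `e n, e (n + 1), …`, lies in both, and hence so does all of `𝒯₀`.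
For diagonal `A` the coefficients `diagDiff` are the increments of `a`, and summation by parts gives
`A - ∑_{n ≤ N} β_n T_{n,n} = (A - a N) T_{N,N}`. This tends strongly to `0` because `T_{N,N}` does
and `a` is bounded. Conversely a series `∑ γ_n T_{n,n}` sends `e k` to `(∑_{n ≤ k} γ_n) e k`, so the
diagonal entries of its sum determine the partial sums of `γ`.
-/

open Filter Topology

theorem isClosed_setOf_exists_tendsto_of_equicontinuous {ι X α : Type*} [TopologicalSpace X]
    [UniformSpace α] [CompleteSpace α] {l : Filter ι} [l.NeBot] {F : ι → X → α}
    (hF : Equicontinuous F) : IsClosed {x | ∃ a, Tendsto (F · x) l (𝓝 a)} := by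
  simp_rw [← cauchy_map_iff_exists_tendsto, cauchy_map_iff']
  refine closure_subset_iff_isClosed.mp fun x hx U hU => ?_
  obtain ⟨V, hV, hV_symm, hVU⟩ := comp_comp_symm_mem_uniformity_sets hU
  obtain ⟨y, hFy, hy⟩ := mem_closure_iff_nhds.mp hx _ (hF x V hV)
  change ∀ᶠ p in l ×ˢ l, (F p.1 x, F p.2 x) ∈ U
  filter_upwards [hy hV] with p hp
  exact hVU ⟨_, ⟨_, hFy p.1, hp⟩, hV_symm.symm _ _ (hFy p.2)⟩

theorem eq_of_sum_range_succ_eq {M : Type*} [AddCommGroup M] {f g : ℕ → M}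
    (h : ∀ n, ∑ i ∈ Finset.range (n + 1), f i = ∑ i ∈ Finset.range (n + 1), g i) : f = g := by
  have h_range : ∀ n, ∑ i ∈ Finset.range n, f i = ∑ i ∈ Finset.range n, g i
    | 0 => by simp
    | n + 1 => h n
  funext n
  rw [← Finset.sum_range_succ_sub_sum f, ← Finset.sum_range_succ_sub_sum g, h, h_range]

theorem pow_apply_of_forall_apply_eq_succ {R M : Type*} [Semiring R] [AddCommMonoid M]
    [TopologicalSpace M] [Module R M] {T : M →L[R] M} {v : ℕ → M}
    (hT : ∀ n, T (v n) = v (n + 1)) (n k : ℕ) : (T ^ n) (v k) = v (k + n) := by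
  induction n with
  | zero => simp
  | succ n ih => rw [pow_succ', mul_apply_eq_comp, ih, hT, add_assoc]

section DiagonalOperators

open scoped InnerProductSpace

variable {ι 𝕜 E : Type*} [RCLike 𝕜] [NormedAddCommGroup E] [InnerProductSpace 𝕜 E]

theorem clm_ext_of_hilbertBasis {F : Type*} [AddCommMonoid F] [Module 𝕜 F] [TopologicalSpace F]
    [T2Space F] (b : HilbertBasis ι 𝕜 E) {A B : E →L[𝕜] F} (h : ∀ i, A (b i) = B (b i)) :
    A = B :=
  ContinuousLinearMap.ext_on (Submodule.dense_iff_topologicalClosure_eq_top.mpr b.dense_span)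
    (Set.forall_mem_range.mpr h)

variable (𝕜) in
/-- The operators that are diagonal with respect to a family `v` of unit vectors: each `v i` is an
eigenvector, with eigenvalue the diagonal entry `⟪v i, A (v i)⟫`. -/
def diagonalOperators (v : ι → E) : Submodule 𝕜 (E →L[𝕜] E) where
  carrier := {A | ∀ i, A (v i) = ⟪v i, A (v i)⟫_𝕜 • v i}
  zero_mem' := by simp
  add_mem' {A B} hA hB i := by
    rw [add_apply, inner_add_right, add_smul, ← hA i, ← hB i]
  smul_mem' c A hA i := by
    rw [smul_apply, inner_smul_right, mul_smul, ← hA i]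

theorem isClosed_diagonalOperators (v : ι → E) :
    IsClosed (diagonalOperators 𝕜 v : Set (E →L[𝕜] E)) := by
  change IsClosed {A : E →L[𝕜] E | ∀ i, A (v i) = ⟪v i, A (v i)⟫_𝕜 • v i}
  rw [Set.ofPred_forall]
  exact isClosed_iInter fun i => isClosed_eq (by fun_prop) (by fun_prop)

variable (𝕜) in
/-- The operators, diagonal or not, whose diagonal entries `⟪v i, A (v i)⟫` converge along `l`. -/
def convergentDiagonalOperators (v : ι → E) (l : Filter ι) : Submodule 𝕜 (E →L[𝕜] E) where
  carrier := {A | ∃ s, Tendsto (fun i => ⟪v i, A (v i)⟫_𝕜) l (𝓝 s)}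
  zero_mem' := ⟨0, by simpa using tendsto_const_nhds⟩
  add_mem' := fun ⟨s, hs⟩ ⟨t, ht⟩ => ⟨s + t, by simpa [inner_add_right] using hs.add ht⟩
  smul_mem' := fun c _ ⟨s, hs⟩ => ⟨c • s, by simpa [inner_smul_right] using hs.const_smul c⟩

theorem norm_inner_apply_self_le (v : E) (A : E →L[𝕜] E) : ‖⟪v, A v⟫_𝕜‖ ≤ ‖v‖ * ‖v‖ * ‖A‖ :=
  calc ‖⟪v, A v⟫_𝕜‖ ≤ ‖v‖ * ‖A v‖ := norm_inner_le_norm _ _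
    _ ≤ ‖v‖ * (‖A‖ * ‖v‖) := by gcongr; exact A.le_opNorm v
    _ = ‖v‖ * ‖v‖ * ‖A‖ := by ring

theorem lipschitzWith_inner_apply_self (v : E) :
    LipschitzWith (‖v‖₊ * ‖v‖₊) fun A : E →L[𝕜] E => ⟪v, A v⟫_𝕜 :=
  LipschitzWith.of_dist_le_mul fun A B => by
    simpa [dist_eq_norm, inner_sub_right] using norm_inner_apply_self_le v (A - B)

theorem isClosed_convergentDiagonalOperators {v : ι → E} {C : NNReal} (hv : ∀ i, ‖v i‖₊ ≤ C)
    (l : Filter ι) [l.NeBot] :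
    IsClosed (convergentDiagonalOperators 𝕜 v l : Set (E →L[𝕜] E)) := by
  have h_equi : UniformEquicontinuous fun i (A : E →L[𝕜] E) => ⟪v i, A (v i)⟫_𝕜 :=
    LipschitzWith.uniformEquicontinuous _ (C * C) fun i =>
      (lipschitzWith_inner_apply_self (v i)).weaken (mul_le_mul' (hv i) (hv i))
  exact isClosed_setOf_exists_tendsto_of_equicontinuous h_equi.equicontinuous

end DiagonalOperators

section Shift

variable {H : Type*} [NormedAddCommGroup H] [InnerProductSpace ℂ H] [CompleteSpace H]

/-- The space `𝒯₀`, the norm closure of the span of the operators `T_{n,n}`. -/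
noncomputable def toeplitzDiagonal (T : H →L[ℂ] H) : Submodule ℂ (H →L[ℂ] H) :=
  (Submodule.span ℂ {B : H →L[ℂ] H | ∃ n : ℕ, B = Tnm T n n}).topologicalClosure

theorem toeplitzDiagonal_le {T : H →L[ℂ] H} {S : Submodule ℂ (H →L[ℂ] H)}
    (hS : IsClosed (S : Set (H →L[ℂ] H))) (h : ∀ n, Tnm T n n ∈ S) : toeplitzDiagonal T ≤ S := by
  refine Submodule.topologicalClosure_minimal _ (Submodule.span_le.mpr ?_) hS
  rintro _ ⟨n, rfl⟩
  exact h n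

theorem sum_range_succ_diagDiff (e : HilbertBasis ℕ ℂ H) (A : H →L[ℂ] H) (N : ℕ) :
    ∑ n ∈ Finset.range (N + 1), diagDiff e A n = ⟪e N, A (e N)⟫ := by
  simp [Finset.sum_range_succ', diagDiff, Finset.sum_range_sub fun n => ⟪e n, A (e n)⟫]

variable (e : HilbertBasis ℕ ℂ H) {T : H →L[ℂ] H} (hT : ∀ n : ℕ, T (e n) = e (n + 1))

include hT

theorem adjoint_shift_pow_apply_basis (n k : ℕ) :
    (ContinuousLinearMap.adjoint T ^ n) (e k) = if n ≤ k then e (k - n) else 0 := by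
  apply e.repr.injective
  ext j
  have h_adjoint : ContinuousLinearMap.adjoint T ^ n = ContinuousLinearMap.adjoint (T ^ n) :=
    (star_pow T n).symm
  rw [e.repr_apply_apply, e.repr_apply_apply, h_adjoint, ContinuousLinearMap.adjoint_inner_right,
    pow_apply_of_forall_apply_eq_succ hT]
  split_ifs with hnk
  · simp only [orthonormal_iff_ite.mp e.orthonormal, eq_tsub_iff_add_eq_of_le hnk]
  · rw [inner_zero_right, e.orthonormal.inner_eq_zero (by lia)]

theorem Tnm_apply_basis (n m k : ℕ) :
    Tnm T n m (e k) = if m ≤ k then e (k - m + n) else 0 := by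
  rw [Tnm, mul_apply_eq_comp, adjoint_shift_pow_apply_basis e hT]
  split_ifs
  · exact pow_apply_of_forall_apply_eq_succ hT n _
  · exact map_zero _

theorem Tnm_self_apply_basis (n k : ℕ) : Tnm T n n (e k) = if n ≤ k then e k else 0 := by
  rw [Tnm_apply_basis e hT]
  split_ifs with hnk
  · rw [Nat.sub_add_cancel hnk]
  · rfl

theorem Tnm_self_apply (n : ℕ) (x : H) :
    Tnm T n n x = x - ∑ i ∈ Finset.range n, ⟪e i, x⟫ • e i := by
  have h : Tnm T n n = ContinuousLinearMap.id ℂ H -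
      ∑ i ∈ Finset.range n, (innerSL ℂ (e i)).smulRight (e i) := by
    refine clm_ext_of_hilbertBasis e fun k => ?_
    rcases le_or_gt n k with hk | hk
    · simp [Tnm_self_apply_basis e hT, orthonormal_iff_ite.mp e.orthonormal, hk, hk.not_gt]
    · simp [Tnm_self_apply_basis e hT, orthonormal_iff_ite.mp e.orthonormal, hk, hk.not_ge]
  simp [h]

theorem tendsto_Tnm_self_apply (x : H) :
    Tendsto (fun n => Tnm T n n x) atTop (𝓝 0) := by
  have h_expansion := (e.hasSum_repr x).tendsto_sum_nat
  simp only [e.repr_apply_apply] at h_expansion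
  simpa [Tnm_self_apply e hT] using h_expansion.const_sub x

theorem toeplitzDiagonal_le_diagonalOperators : toeplitzDiagonal T ≤ diagonalOperators ℂ e := by
  refine toeplitzDiagonal_le (isClosed_diagonalOperators e) fun n k => ?_
  rw [Tnm_self_apply_basis e hT]
  split_ifs <;> simp [e.orthonormal.1 k]

theorem toeplitzDiagonal_le_convergentDiagonalOperators :
    toeplitzDiagonal T ≤ convergentDiagonalOperators ℂ e atTop := by
  have h_norm : ∀ k, ‖e k‖₊ ≤ 1 := fun k => (e.orthonormal.1 k).le
  refine toeplitzDiagonal_le (isClosed_convergentDiagonalOperators h_norm atTop) fun n => ?_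
  refine ⟨1, tendsto_const_nhds.congr' ?_⟩
  filter_upwards [eventually_ge_atTop n] with k hk
  simp [Tnm_self_apply_basis e hT, hk, e.orthonormal.1 k]

theorem sum_smul_Tnm_self_apply_basis (γ : ℕ → ℂ) (N k : ℕ) :
    (∑ n ∈ Finset.range N, γ n • Tnm T n n) (e k) =
      (∑ n ∈ Finset.range (min N (k + 1)), γ n) • e k := by
  have h_range : {n ∈ Finset.range N | n ≤ k} = Finset.range (min N (k + 1)) := by
    ext n
    simp
  simp only [sum_apply, smul_apply, Tnm_self_apply_basis e hT, smul_ite, smul_zero,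
    ← Finset.sum_filter, h_range, Finset.sum_smul]

theorem sub_sum_diagDiff_smul_Tnm_self {A : H →L[ℂ] H} (hA : A ∈ diagonalOperators ℂ e)
    (N : ℕ) :
    A - ∑ n ∈ Finset.range (N + 1), diagDiff e A n • Tnm T n n =
      (A - ⟪e N, A (e N)⟫ • 1) * Tnm T N N := by
  refine clm_ext_of_hilbertBasis e fun k => ?_
  rw [sub_apply, sum_smul_Tnm_self_apply_basis e hT, Nat.add_min_add_right,
    sum_range_succ_diagDiff, mul_apply_eq_comp, Tnm_self_apply_basis e hT]
  rcases le_or_gt N k with hNk | hkN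
  · simp [hNk]
  · rw [min_eq_right hkN.le, ← hA k, sub_self, if_neg hkN.not_ge, map_zero]

theorem tendsto_sum_diagDiff_smul_Tnm_self {A : H →L[ℂ] H} (hA : A ∈ diagonalOperators ℂ e)
    (x : H) :
    Tendsto (fun N : ℕ => (∑ n ∈ Finset.range N, diagDiff e A n • Tnm T n n) x)
      atTop (𝓝 (A x)) := by
  have h_remainder : ∀ N, (∑ n ∈ Finset.range (N + 1), diagDiff e A n • Tnm T n n) x =
      A x - (A (Tnm T N N x) - ⟪e N, A (e N)⟫ • Tnm T N N x) := fun N => by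
    rw [← sub_sub_cancel A (∑ n ∈ Finset.range (N + 1), diagDiff e A n • Tnm T n n),
      sub_sum_diagDiff_smul_Tnm_self e hT hA]
    simp
  have h_proj := tendsto_Tnm_self_apply e hT x
  have h_bdd : IsBoundedUnder (· ≤ ·) atTop fun N => ‖⟪e N, A (e N)⟫‖ :=
    isBoundedUnder_of ⟨‖A‖, fun N => by
      simpa [e.orthonormal.1 N] using norm_inner_apply_self_le (e N) A⟩
  have h_smul_proj : Tendsto (fun N => ⟪e N, A (e N)⟫ • Tnm T N N x) atTop (𝓝 0) :=
    h_bdd.smul_tendsto_zero h_proj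
  rw [← tendsto_add_atTop_iff_nat 1]
  simpa [h_remainder] using
    (((A.continuous.tendsto 0).comp h_proj).sub h_smul_proj).const_sub (A x)

theorem eq_diagDiff_of_tendsto_inner {A : H →L[ℂ] H} {γ : ℕ → ℂ}
    (hγ : ∀ k, Tendsto (fun N : ℕ => ⟪e k, (∑ n ∈ Finset.range N, γ n • Tnm T n n) (e k)⟫)
      atTop (𝓝 ⟪e k, A (e k)⟫)) :
    γ = diagDiff e A := by
  refine eq_of_sum_range_succ_eq fun k => ?_
  rw [sum_range_succ_diagDiff]
  refine tendsto_nhds_unique (tendsto_const_nhds.congr' ?_) (hγ k)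
  filter_upwards [eventually_ge_atTop (k + 1)] with N hN
  simp [sum_smul_Tnm_self_apply_basis e hT, min_eq_right hN, e.orthonormal.1 k]

end Shift

/-- every `A ∈ 𝒯₀` is uniquely represented as `A = Σ_{n} β_n T_{n,n}` (convergence
in the strong operator topology), where `Σ β_n` converges and `β` is given by `diagDiff`. -/
theorem T0_series_representation {H : Type*} [NormedAddCommGroup H]
    [InnerProductSpace ℂ H] [CompleteSpace H] (e : HilbertBasis ℕ ℂ H) (T : H →L[ℂ] H)
    (hT : ∀ n : ℕ, T (e n) = e (n + 1)) :
    ∀ A ∈ (Submodule.span ℂ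
        {B : H →L[ℂ] H | ∃ n : ℕ, B = Tnm T n n}).topologicalClosure,
      -- the partial sums converge to `A` in the strong operator topology
      (∀ x : H, Filter.Tendsto
          (fun N : ℕ => (∑ n ∈ Finset.range N, diagDiff e A n • Tnm T n n) x)
          Filter.atTop (nhds (A x))) ∧
      -- the complex series `Σ β_n` converges
      (∃ s : ℂ, Filter.Tendsto (fun N : ℕ => ∑ n ∈ Finset.range N, diagDiff e A n)
        Filter.atTop (nhds s)) ∧
      -- uniqueness of the representation
      (∀ γ : ℕ → ℂ, (∀ x : H, Filter.Tendsto
          (fun N : ℕ => (∑ n ∈ Finset.range N, γ n • Tnm T n n) x)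
          Filter.atTop (nhds (A x))) → γ = diagDiff e A) := by
  intro A hA
  have h_diag := toeplitzDiagonal_le_diagonalOperators e hT hA
  obtain ⟨s, hs⟩ := toeplitzDiagonal_le_convergentDiagonalOperators e hT hA
  refine ⟨tendsto_sum_diagDiff_smul_Tnm_self e hT h_diag, ⟨s, ?_⟩, fun γ hγ => ?_⟩
  · rw [← tendsto_add_atTop_iff_nat 1]
    simpa only [sum_range_succ_diagDiff] using hs
  · exact eq_diagDiff_of_tendsto_inner e hT fun k => tendsto_const_nhds.inner (hγ (e k))
end

section
/- Let ρ be a continuous linear functional on 𝒯. Then ρ vanishes on every compact operator belonging to 𝒯 if and only if ρ(T_{n,m}) = ρ(T_{k,l}) whenever n, m, k, l ∈ ℕ satisfy m − n = l − k (as integers). -/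
/-!
The operators `1 - Tʲ (T*)ʲ` are compact because `1 - T T*` is, so
`T_{n,m} - T_{n+j,m+j} = Tⁿ (1 - Tʲ (T*)ʲ) (T*)ᵐ` is compact and a functional that kills the compact
operators is constant along the diagonals.

Conversely, the compression `a ↦ (T*)ʲ a Tʲ` moves every `T_{n,m}` along its diagonal. Since the
`T_{n,m}` span a dense subspace, a functional that is constant along the diagonals satisfies
`ρ a = ρ ((T*)ʲ a Tʲ)` for every `a` in the algebra. The powers `(T*)ʲ` are contractions tending
strongly to `0`, hence uniformly on compact sets; therefore `(T*)ʲ a Tʲ → 0` in norm when `a` is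
compact, and `ρ a = 0`.
-/

open ContinuousLinearMap Filter Topology

section Monoid

variable {M : Type*} [Monoid M] {u v : M}

-- The subtractions truncate: one of `k - m` and `m - k` is `0`.
lemma pow_mul_pow_of_mul_eq_one (h : u * v = 1) (m k : ℕ) :
    u ^ m * v ^ k = v ^ (k - m) * u ^ (m - k) := by
  rcases le_total m k with hmk | hkm
  · obtain ⟨j, rfl⟩ := Nat.exists_eq_add_of_le hmk
    simp [pow_add, ← mul_assoc, pow_mul_pow_eq_one m h]
  · obtain ⟨j, rfl⟩ := Nat.exists_eq_add_of_le' hkm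
    simp [pow_add, mul_assoc, pow_mul_pow_eq_one k h]

lemma pow_mul_pow_mul_pow_mul_pow_of_mul_eq_one (h : u * v = 1) (n m k l : ℕ) :
    v ^ n * u ^ m * (v ^ k * u ^ l) = v ^ (n + (k - m)) * u ^ (m - k + l) := by
  rw [mul_assoc, ← mul_assoc (u ^ m), pow_mul_pow_of_mul_eq_one h, pow_add, pow_add]
  simp only [mul_assoc]

lemma coe_closure_pair_of_mul_eq_one (h : u * v = 1) :
    (Submonoid.closure {v, u} : Set M) = Set.range fun p : ℕ × ℕ => v ^ p.1 * u ^ p.2 := by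
  refine subset_antisymm (fun x hx => ?_) ?_
  · induction hx using Submonoid.closure_induction with
    | mem x hx =>
      rcases hx with rfl | rfl
      exacts [⟨(1, 0), by simp⟩, ⟨(0, 1), by simp⟩]
    | one => exact ⟨(0, 0), by simp⟩
    | mul x y _ _ hx hy =>
      obtain ⟨⟨n, m⟩, rfl⟩ := hx
      obtain ⟨⟨k, l⟩, rfl⟩ := hy
      exact ⟨(n + (k - m), m - k + l), (pow_mul_pow_mul_pow_mul_pow_of_mul_eq_one h n m k l).symm⟩
  · rintro _ ⟨⟨n, m⟩, rfl⟩
    exact mul_mem (pow_mem (Submonoid.subset_closure (by simp)) n)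
      (pow_mem (Submonoid.subset_closure (by simp)) m)

end Monoid

section StarAlgebra

variable {R A : Type*} [CommSemiring R] [StarRing R] [Semiring A] [StarRing A] [Algebra R A]
  [StarModule R A] {v : A}

lemma toSubmodule_adjoin_singleton_of_star_mul_self_eq_one (h : star v * v = 1) :
    Subalgebra.toSubmodule (StarAlgebra.adjoin R {v}).toSubalgebra =
      Submodule.span R (Set.range fun p : ℕ × ℕ => v ^ p.1 * star v ^ p.2) := by
  rw [StarAlgebra.adjoin_eq_span, Set.star_singleton, Set.singleton_union,
    coe_closure_pair_of_mul_eq_one h]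

lemma elemental_clm_ext_of_star_mul_self_eq_one [TopologicalSpace A] [IsSemitopologicalSemiring A]
    [ContinuousStar A] {F : Type*} [AddCommMonoid F] [Module R F] [TopologicalSpace F] [T2Space F]
    (h : star v * v = 1) {f g : StarAlgebra.elemental R v →L[R] F}
    (hfg : ∀ (n m : ℕ) (hnm : v ^ n * star v ^ m ∈ StarAlgebra.elemental R v),
      f ⟨_, hnm⟩ = g ⟨_, hnm⟩) : f = g := by
  have hadjoin (x : A) (hx : x ∈ StarAlgebra.adjoin R {v}) :
      ∃ hx' : x ∈ StarAlgebra.elemental R v, f ⟨x, hx'⟩ = g ⟨x, hx'⟩ := by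
    replace hx : x ∈ Subalgebra.toSubmodule (StarAlgebra.adjoin R {v}).toSubalgebra := hx
    rw [toSubmodule_adjoin_singleton_of_star_mul_self_eq_one h] at hx
    induction hx using Submodule.span_induction with
    | mem x hx =>
      obtain ⟨⟨n, m⟩, rfl⟩ := hx
      exact ⟨mul_mem (pow_mem (StarAlgebra.elemental.self_mem R v) n)
        (pow_mem (StarAlgebra.elemental.star_self_mem R v) m), hfg n m _⟩
    | zero => exact ⟨zero_mem _, (map_zero f).trans (map_zero g).symm⟩
    | add x y _ _ hx hy =>
      obtain ⟨hx, hfx⟩ := hx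
      obtain ⟨hy, hfy⟩ := hy
      exact ⟨add_mem hx hy, (map_add f ⟨x, hx⟩ ⟨y, hy⟩).trans
        ((congrArg₂ _ hfx hfy).trans (map_add g _ _).symm)⟩
    | smul c x _ hx =>
      obtain ⟨hx, hfx⟩ := hx
      exact ⟨SMulMemClass.smul_mem c hx, (map_smul f c ⟨x, hx⟩).trans
        ((congrArg _ hfx).trans (map_smul g _ _).symm)⟩
  have hdense := (denseRange_inclusion_iff
    (subset_closure (s := (StarAlgebra.adjoin R {v} : Set A)))).2 subset_rfl
  exact DFunLike.coe_injective <| hdense.equalizer f.continuous g.continuous <|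
    funext fun x => (hadjoin x x.2).2

end StarAlgebra

lemma norm_le_one_of_star_mul_self_eq_one {A : Type*} [NormedRing A] [StarRing A] [CStarRing A]
    {v : A} (h : star v * v = 1) : ‖v‖ ≤ 1 := by
  cases subsingleton_or_nontrivial A
  · simp [Subsingleton.elim v 0]
  · have hsq : ‖v‖ * ‖v‖ = 1 := by rw [← CStarRing.norm_star_mul_self, h, CStarRing.norm_one]
    nlinarith [norm_nonneg v]

section Normed

variable {𝕜 E F G : Type*} [NontriviallyNormedField 𝕜] [NormedAddCommGroup E] [NormedSpace 𝕜 E]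
  [NormedAddCommGroup F] [NormedSpace 𝕜 F] [NormedAddCommGroup G] [NormedSpace 𝕜 G]

lemma norm_clm_pow_le_one {S : E →L[𝕜] E} (hS : ‖S‖ ≤ 1) (k : ℕ) : ‖S ^ k‖ ≤ 1 := by
  induction k with
  | zero => exact norm_id_le
  | succ k ih =>
    rw [pow_succ]
    exact (norm_mul_le _ _).trans (mul_le_one₀ ih (norm_nonneg S) hS)

lemma equicontinuous_clm_pow_of_norm_le_one {S : E →L[𝕜] E} (hS : ‖S‖ ≤ 1) :
    Equicontinuous fun (k : ℕ) (x : E) => (S ^ k) x :=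
  (LipschitzWith.uniformEquicontinuous _ 1 fun k =>
    lipschitzWith_of_opNorm_le (norm_clm_pow_le_one hS k)).equicontinuous

variable {ι : Type*} {l : Filter ι} {S : ι → F →L[𝕜] G} {S₀ : F →L[𝕜] G}

lemma tendsto_clm_apply_of_equicontinuous_of_dense_span (hS : Equicontinuous fun i x => S i x)
    {s : Set F} (hs : Dense (Submodule.span 𝕜 s : Set F))
    (h : ∀ x ∈ s, Tendsto (fun i => S i x) l (𝓝 (S₀ x))) (x : F) :
    Tendsto (fun i => S i x) l (𝓝 (S₀ x)) := by
  have hspan (y : F) (hy : y ∈ Submodule.span 𝕜 s) : Tendsto (fun i => S i y) l (𝓝 (S₀ y)) := by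
    induction hy using Submodule.span_induction with
    | mem y hy => exact h y hy
    | zero => simp [tendsto_const_nhds]
    | add y z _ _ hy hz => simpa using hy.add hz
    | smul c y _ hy => simpa using hy.const_smul c
  exact (hS.isClosed_setOfPred_tendsto S₀.continuous).closure_subset_iff.2 hspan (hs x)

lemma tendsto_clm_comp_of_equicontinuous_of_isCompactOperator
    (hS : Equicontinuous fun i x => S i x) (h : ∀ x, Tendsto (fun i => S i x) l (𝓝 (S₀ x)))
    {a : E →L[𝕜] F} (ha : IsCompactOperator a) :
    Tendsto (fun i => S i ∘L a) l (𝓝 (S₀ ∘L a)) := by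
  refine (UniformConvergenceCLM.tendsto_iff_tendstoUniformlyOn _ _ _).2 fun B hB => ?_
  obtain ⟨K, hK, haK⟩ := ha.image_subset_compact_of_isVonNBounded (f := (a : E →ₗ[𝕜] F)) hB
  have hunif : TendstoUniformlyOn (fun i x => S i x) S₀ l K := by
    refine UniformOnFun.tendsto_iff_tendstoUniformlyOn.1
      ((EquicontinuousOn.tendsto_uniformOnFun_iff_pi' (𝔖 := {K}) ?_ ?_ l S₀).2 ?_) K rfl
    · simpa using hK
    · exact fun K _ => hS.equicontinuousOn K
    · exact tendsto_pi_nhds.2 fun x => h x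
  exact (hunif.comp a).mono (Set.image_subset_iff.1 haK)

end Normed

section PureIsometry

variable {𝕜 H : Type*} [RCLike 𝕜] [NormedAddCommGroup H] [InnerProductSpace 𝕜 H] [CompleteSpace H]
  {T a : H →L[𝕜] H}

lemma equicontinuous_adjoint_pow (h : adjoint T * T = 1) :
    Equicontinuous fun (k : ℕ) (x : H) => (adjoint T ^ k) x :=
  equicontinuous_clm_pow_of_norm_le_one <|
    (LinearIsometryEquiv.norm_map _ T).trans_le (norm_le_one_of_star_mul_self_eq_one h)

/-- Pure isometries of a Hilbert space: those without unitary part in the Wold decomposition,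
encoded by the strong convergence of the powers of `T*` to `0`. -/
structure IsPureIsometry (T : H →L[𝕜] H) : Prop where
  adjoint_mul_self : adjoint T * T = 1
  tendsto_adjoint_pow_apply (x : H) : Tendsto (fun k : ℕ => (adjoint T ^ k) x) atTop (𝓝 0)

lemma IsPureIsometry.tendsto_adjoint_pow_mul_mul_pow (hT : IsPureIsometry T)
    (ha : IsCompactOperator a) : Tendsto (fun k : ℕ => adjoint T ^ k * a * T ^ k) atTop (𝓝 0) := by
  have hnorm : ‖T‖ ≤ 1 := norm_le_one_of_star_mul_self_eq_one hT.adjoint_mul_self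
  have hleft : Tendsto (fun k : ℕ => adjoint T ^ k * a) atTop (𝓝 0) := by
    have hcomp : Tendsto (fun k : ℕ => (adjoint T ^ k) ∘L a) atTop (𝓝 ((0 : H →L[𝕜] H) ∘L a)) :=
      tendsto_clm_comp_of_equicontinuous_of_isCompactOperator
        (S := fun k : ℕ => adjoint T ^ k) (S₀ := 0)
        (equicontinuous_adjoint_pow hT.adjoint_mul_self) hT.tendsto_adjoint_pow_apply ha
    simpa only [zero_comp, mul_def] using hcomp
  refine squeeze_zero_norm (fun k => ?_) (tendsto_zero_iff_norm_tendsto_zero.1 hleft)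
  calc ‖adjoint T ^ k * a * T ^ k‖ ≤ ‖adjoint T ^ k * a‖ * ‖T ^ k‖ := norm_mul_le _ _
    _ ≤ ‖adjoint T ^ k * a‖ :=
      mul_le_of_le_one_right (norm_nonneg _) (norm_clm_pow_le_one hnorm k)

lemma isCompactOperator_one_sub_pow_mul_adjoint_pow
    (h : IsCompactOperator (1 - T * adjoint T : H →L[𝕜] H)) (j : ℕ) :
    IsCompactOperator (1 - T ^ j * adjoint T ^ j : H →L[𝕜] H) := by
  induction j with
  | zero =>
    rw [pow_zero, pow_zero, mul_one, sub_self]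
    exact isCompactOperator_zero
  | succ j ih =>
    have hsplit : 1 - T ^ (j + 1) * adjoint T ^ (j + 1) =
        (1 - T ^ j * adjoint T ^ j) + T ^ j * (1 - T * adjoint T) * adjoint T ^ j := by
      rw [pow_succ, pow_succ']
      noncomm_ring
    rw [hsplit]
    exact ih.add ((h.clm_comp (T ^ j)).comp_clm (adjoint T ^ j))

end PureIsometry

section Shift

variable {𝕜 ι H : Type*} [RCLike 𝕜] [NormedAddCommGroup H] [InnerProductSpace 𝕜 H]

lemma dense_span_range_hilbertBasis (e : HilbertBasis ι 𝕜 H) :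
    Dense (Submodule.span 𝕜 (Set.range e) : Set H) :=
  Submodule.dense_iff_topologicalClosure_eq_top.2 e.dense_span

lemma hilbertBasis_ext_inner_left (e : HilbertBasis ι 𝕜 H) {x y : H}
    (h : ∀ i, inner 𝕜 (e i) x = inner 𝕜 (e i) y) : x = y :=
  e.repr.injective <| lp.ext <| funext fun i => by simpa only [e.repr_apply_apply] using h i

lemma isCompactOperator_rankOne (x y : H) :
    IsCompactOperator (InnerProductSpace.rankOne 𝕜 x y) :=
  ((isCompactOperator_id (E := 𝕜)).comp_clm (innerSL 𝕜 y)).clm_comp (toSpanSingleton 𝕜 x)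

variable [CompleteSpace H] {e : HilbertBasis ℕ 𝕜 H} {T : H →L[𝕜] H}

lemma adjoint_shift_apply_zero (hT : ∀ n, T (e n) = e (n + 1)) : adjoint T (e 0) = 0 :=
  hilbertBasis_ext_inner_left e fun i => by
    simp [adjoint_inner_right, hT, orthonormal_iff_ite.1 e.orthonormal]

lemma adjoint_shift_apply_succ (hT : ∀ n, T (e n) = e (n + 1)) (n : ℕ) :
    adjoint T (e (n + 1)) = e n :=
  hilbertBasis_ext_inner_left e fun i => by
    simp [adjoint_inner_right, hT, orthonormal_iff_ite.1 e.orthonormal]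

lemma adjoint_shift_mul_shift (hT : ∀ n, T (e n) = e (n + 1)) : adjoint T * T = 1 :=
  ContinuousLinearMap.ext_on (dense_span_range_hilbertBasis e) <| Set.forall_mem_range.2 fun n => by
    simp [hT, adjoint_shift_apply_succ hT]

lemma one_sub_shift_mul_adjoint_shift (hT : ∀ n, T (e n) = e (n + 1)) :
    1 - T * adjoint T = InnerProductSpace.rankOne 𝕜 (e 0) (e 0) := by
  refine ContinuousLinearMap.ext_on (dense_span_range_hilbertBasis e) ?_
  rintro _ ⟨_ | n, rfl⟩
  · simp [adjoint_shift_apply_zero hT, e.orthonormal.1]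
  · simp [adjoint_shift_apply_succ hT, hT, orthonormal_iff_ite.1 e.orthonormal]

lemma adjoint_shift_pow_apply_eq_zero (hT : ∀ n, T (e n) = e (n + 1)) {n k : ℕ} (hnk : n < k) :
    (adjoint T ^ k) (e n) = 0 := by
  induction k generalizing n with
  | zero => omega
  | succ k ih =>
    rw [pow_succ, mul_apply_eq_comp]
    rcases n with _ | n
    · rw [adjoint_shift_apply_zero hT, map_zero]
    · rw [adjoint_shift_apply_succ hT, ih (Nat.lt_of_succ_lt_succ hnk)]

lemma isPureIsometry_shift (hT : ∀ n, T (e n) = e (n + 1)) : IsPureIsometry T where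
  adjoint_mul_self := adjoint_shift_mul_shift hT
  tendsto_adjoint_pow_apply := by
    refine tendsto_clm_apply_of_equicontinuous_of_dense_span (S₀ := 0)
      (equicontinuous_adjoint_pow (adjoint_shift_mul_shift hT)) (dense_span_range_hilbertBasis e) ?_
    rintro _ ⟨n, rfl⟩
    exact tendsto_const_nhds.congr' <| (eventually_gt_atTop n).mono fun k hk =>
      (adjoint_shift_pow_apply_eq_zero hT hk).symm

end Shift

section Toeplitz

variable {H : Type*} [NormedAddCommGroup H] [InnerProductSpace ℂ H] [CompleteSpace H]
  {T : H →L[ℂ] H} {F : Type*} [AddCommGroup F] [Module ℂ F] [TopologicalSpace F]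

lemma isCompactOperator_Tnm_sub_Tnm_add
    (h : IsCompactOperator (1 - T * adjoint T : H →L[ℂ] H)) (n m j : ℕ) :
    IsCompactOperator (Tnm T n m - Tnm T (n + j) (m + j)) := by
  have hfactor : Tnm T n m - Tnm T (n + j) (m + j) =
      T ^ n * (1 - T ^ j * adjoint T ^ j) * adjoint T ^ m := by
    rw [Tnm, Tnm, pow_add, add_comm m, pow_add]
    noncomm_ring
  rw [hfactor]
  exact ((isCompactOperator_one_sub_pow_mul_adjoint_pow h j).clm_comp (T ^ n)).comp_clm _

lemma isCompactOperator_Tnm_sub_Tnm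
    (h : IsCompactOperator (1 - T * adjoint T : H →L[ℂ] H)) {n m k l : ℕ}
    (hd : (m : ℤ) - n = l - k) : IsCompactOperator (Tnm T n m - Tnm T k l) := by
  rcases le_total n k with hnk | hkn
  · obtain ⟨j, rfl⟩ := Nat.exists_eq_add_of_le hnk
    obtain rfl : l = m + j := by omega
    exact isCompactOperator_Tnm_sub_Tnm_add h n m j
  · obtain ⟨j, rfl⟩ := Nat.exists_eq_add_of_le hkn
    obtain rfl : m = l + j := by omega
    simpa using (isCompactOperator_Tnm_sub_Tnm_add h k l j).neg

lemma exists_adjoint_pow_mul_Tnm_mul_pow_eq_Tnm (h : adjoint T * T = 1) (j n m : ℕ) :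
    ∃ k l : ℕ, (l : ℤ) - k = m - n ∧ adjoint T ^ j * Tnm T n m * T ^ j = Tnm T k l := by
  refine ⟨n - j + (j - m - (j - n)), j - n - (j - m) + (m - j), by omega, ?_⟩
  have hprod := pow_mul_pow_mul_pow_mul_pow_of_mul_eq_one h (n - j) (j - n) (j - m) (m - j)
  rw [Tnm, Tnm, ← hprod, ← pow_mul_pow_of_mul_eq_one h, ← pow_mul_pow_of_mul_eq_one h]
  simp only [mul_assoc]

/-- The generator `T` as an element of the Toeplitz algebra. -/
noncomputable def ToeplitzAlg.gen (T : H →L[ℂ] H) : ToeplitzAlg T :=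
  ⟨T, StarAlgebra.elemental.self_mem ℂ T⟩

lemma Tnm_mem_toeplitzAlg (T : H →L[ℂ] H) (n m : ℕ) : Tnm T n m ∈ ToeplitzAlg T :=
  (ToeplitzAlg.gen T ^ n * star (ToeplitzAlg.gen T) ^ m).2

lemma apply_star_gen_pow_mul_mul_gen_pow [T2Space F] {ρ : ToeplitzAlg T →L[ℂ] F}
    (h : adjoint T * T = 1)
    (hρ : ∀ (n m k l : ℕ) (hnm : Tnm T n m ∈ ToeplitzAlg T) (hkl : Tnm T k l ∈ ToeplitzAlg T),
      (m : ℤ) - (n : ℤ) = (l : ℤ) - (k : ℤ) → ρ ⟨Tnm T n m, hnm⟩ = ρ ⟨Tnm T k l, hkl⟩)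
    (j : ℕ) (a : ToeplitzAlg T) :
    ρ (star (ToeplitzAlg.gen T) ^ j * a * ToeplitzAlg.gen T ^ j) = ρ a := by
  let compression := mulLeftRight ℂ (ToeplitzAlg T) (star (ToeplitzAlg.gen T) ^ j)
    (ToeplitzAlg.gen T ^ j)
  suffices hcomp : ρ ∘L compression = ρ from DFunLike.congr_fun hcomp a
  refine elemental_clm_ext_of_star_mul_self_eq_one h fun n m hnm => ?_
  obtain ⟨k, l, hkl, heq⟩ := exists_adjoint_pow_mul_Tnm_mul_pow_eq_Tnm h j n m
  calc ρ (compression ⟨Tnm T n m, hnm⟩) = ρ ⟨Tnm T k l, Tnm_mem_toeplitzAlg T k l⟩ :=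
        congrArg ρ (Subtype.ext heq)
    _ = ρ ⟨Tnm T n m, hnm⟩ := hρ k l n m _ hnm hkl

lemma IsPureIsometry.apply_eq_zero_of_isCompactOperator [T2Space F] {ρ : ToeplitzAlg T →L[ℂ] F}
    (hT : IsPureIsometry T)
    (hρ : ∀ (n m k l : ℕ) (hnm : Tnm T n m ∈ ToeplitzAlg T) (hkl : Tnm T k l ∈ ToeplitzAlg T),
      (m : ℤ) - (n : ℤ) = (l : ℤ) - (k : ℤ) → ρ ⟨Tnm T n m, hnm⟩ = ρ ⟨Tnm T k l, hkl⟩)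
    {a : ToeplitzAlg T} (ha : IsCompactOperator (a : H →L[ℂ] H)) : ρ a = 0 := by
  have hlim : Tendsto (fun j : ℕ => star (ToeplitzAlg.gen T) ^ j * a * ToeplitzAlg.gen T ^ j)
      atTop (𝓝 0) :=
    tendsto_subtype_rng.2 (hT.tendsto_adjoint_pow_mul_mul_pow ha)
  have hρlim := (ρ.continuous.tendsto 0).comp hlim
  simp only [Function.comp_def, apply_star_gen_pow_mul_mul_gen_pow hT.adjoint_mul_self hρ,
    map_zero] at hρlim
  exact tendsto_nhds_unique tendsto_const_nhds hρlim

theorem vanishes_on_compacts_iff_general [T2Space F] (hT : IsPureIsometry T)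
    (hdefect : IsCompactOperator (1 - T * adjoint T : H →L[ℂ] H)) (ρ : ToeplitzAlg T →L[ℂ] F) :
    (∀ a : ToeplitzAlg T, IsCompactOperator (a : H →L[ℂ] H) → ρ a = 0) ↔
    (∀ (n m k l : ℕ) (hnm : Tnm T n m ∈ ToeplitzAlg T) (hkl : Tnm T k l ∈ ToeplitzAlg T),
      (m : ℤ) - (n : ℤ) = (l : ℤ) - (k : ℤ) →
        ρ ⟨Tnm T n m, hnm⟩ = ρ ⟨Tnm T k l, hkl⟩) := by
  refine ⟨fun hρ n m k l hnm hkl hd => ?_,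
    fun hρ a ha => hT.apply_eq_zero_of_isCompactOperator hρ ha⟩
  rw [← sub_eq_zero, ← map_sub]
  exact hρ _ (isCompactOperator_Tnm_sub_Tnm hdefect hd)

end Toeplitz

/-- a continuous linear functional `ρ` on `𝒯` vanishes on all compact operators
in `𝒯` iff `ρ(T_{n,m}) = ρ(T_{k,l})` whenever `m - n = l - k`. -/
theorem vanishes_on_compacts_iff {H : Type*} [NormedAddCommGroup H]
    [InnerProductSpace ℂ H] [CompleteSpace H] (e : HilbertBasis ℕ ℂ H) (T : H →L[ℂ] H)
    (hT : ∀ n : ℕ, T (e n) = e (n + 1))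
    (ρ : (ToeplitzAlg T) →L[ℂ] ℂ) :
    (∀ a : ToeplitzAlg T, IsCompactOperator (⇑(a : H →L[ℂ] H)) → ρ a = 0) ↔
    (∀ (n m k l : ℕ) (hnm : Tnm T n m ∈ ToeplitzAlg T) (hkl : Tnm T k l ∈ ToeplitzAlg T),
      (m : ℤ) - (n : ℤ) = (l : ℤ) - (k : ℤ) →
        ρ ⟨Tnm T n m, hnm⟩ = ρ ⟨Tnm T k l, hkl⟩) :=
  vanishes_on_compacts_iff_general (isPureIsometry_shift hT)
    (one_sub_shift_mul_adjoint_shift hT ▸ isCompactOperator_rankOne (e 0) (e 0)) ρ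
end
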